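/- Let p ≥ 0 be a fixed integer and suppose φ(θ) = e^{−V(θ)} where V is of class C^{k−1,1}(S¹) with k ≥ 2p+1. Then lim_{n→∞} (1/n^p)·‖π_n^{(p)}‖_φ / ‖π_n‖_φ = 1, where π_n^{(p)} is the p-th derivative of the polynomial π_n and ‖f‖_φ = ⟨f(e^{iθ}), f(e^{iθ})⟩_φ^{1/2}. -/

import Mathlib

/-! The upper half of the limit rests on a comparison of `π_n` with `z^{n-M} π_M` for a fixed `M`.

Write `N` for the weighted norm on polynomials restricted to the unit circle.

* Since `π_n` is orthogonal to all polynomials of degree `< n`, every `Q` of degree `≤ n` with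
  `n`-th coefficient `1` satisfies `N(Q)² = N(π_n)² + N(Q - π_n)²` (`N_sq_eq_add`).  Multiplication
  by `z` preserves `N`, so `N(π_n)` is antitone.  It is bounded below by a positive constant because
  the weight is bounded below and the unweighted norm dominates the leading coefficient; hence
  `N(π_n) → h > 0`.
* Lower bound: `π_n^{(p)}` is `n(n-1)⋯(n-p+1)` times a monic polynomial of degree `n-p`, so
  `N(π_n^{(p)}) ≥ n(n-1)⋯(n-p+1) N(π_{n-p}) ≥ n(n-1)⋯(n-p+1) N(π_n)`.
* Upper bound: put `r = z^{n-M} π_M - π_n`, so that `N(r)² = N(π_M)² - N(π_n)²`.  By Parseval and the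
  two-sided bounds on the weight, `N(r^{(p)}) ≤ C n^p N(r)` with `C` independent of `n` and `M`
  (`N_bernstein`), while the Leibniz rule gives `N((z^{n-M} π_M)^{(p)}) ≤ n^p N(π_M) + O_M(n^{p-1})`
  (`N_shift_deriv`).  Hence the upper limit of the quotient is at most
  `(N(π_M) + C √(N(π_M)² - h²)) / h`, which tends to `1` as `M → ∞`. -/

open scoped Real
open Complex MeasureTheory Filter Set

noncomputable section

/-- The inner product associated with a weight `w` on the unit circle:
`⟨f,g⟩_w = (1/(2π)) ∫_{-π}^{π} f(θ) conj(g(θ)) w(θ) dθ`. -/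
def ip (w : ℝ → ℝ) (f g : ℝ → ℂ) : ℂ :=
  (1 / (2 * π)) * ∫ θ in (-π)..π, f θ * (starRingEnd ℂ) (g θ) * (w θ : ℂ)

/-- `P` is the monic orthogonal polynomial of degree `n` for the weight `w`:
monic, of degree `n`, and orthogonal to `e^{ijθ}` for all `0 ≤ j < n`. -/
def IsMonicOPUC (w : ℝ → ℝ) (n : ℕ) (P : Polynomial ℂ) : Prop :=
  P.Monic ∧ P.natDegree = n ∧
    ∀ j < n,
      ip w (fun θ => P.eval (Complex.exp (Complex.I * θ)))
        (fun θ => Complex.exp (Complex.I * (j : ℂ) * θ)) = 0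

/-- `γ > 0` is the normalization constant of `P` w.r.t. the weight `w`:
`γ² ⟨P(e^{iθ}), P(e^{iθ})⟩_w = 1`. -/
def IsNormConst (w : ℝ → ℝ) (P : Polynomial ℂ) (γ : ℝ) : Prop :=
  0 < γ ∧
    (γ : ℂ) ^ 2 *
      ip w (fun θ => P.eval (Complex.exp (Complex.I * θ)))
        (fun θ => P.eval (Complex.exp (Complex.I * θ))) = 1

/-- `V` is `2π`-periodic of class `C^{k-1,1}(S¹)`: `V` is `(k-1)` times continuously
differentiable and `V^{(k-1)}` is Lipschitz. -/
def ClassC (k : ℕ) (V : ℝ → ℝ) : Prop :=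
  Function.Periodic V (2 * π) ∧ ContDiff ℝ (k - 1 : ℕ) V ∧
    ∃ L : NNReal, LipschitzWith L (iteratedDeriv (k - 1) V)

/-- Fourier coefficient `V_j = (1/(2π)) ∫_{-π}^{π} V(θ) e^{-ijθ} dθ`. -/
def Fc (V : ℝ → ℝ) (j : ℤ) : ℂ :=
  (1 / (2 * π)) * ∫ θ in (-π)..π, (V θ : ℂ) * Complex.exp (-Complex.I * (j : ℂ) * θ)

/-- `N(z) = Σ_{j=1}^{∞} V_{-j} z^{-j}` (relevant for `|z| ≥ 1`). -/
def Nout (V : ℝ → ℝ) (z : ℂ) : ℂ := ∑' j : ℕ, Fc V (-(j + 1 : ℤ)) / z ^ (j + 1)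

/-- `N̂(z) = Σ_{j=1}^{∞} V_j z^j` (relevant for `|z| ≤ 1`). -/
def Nin (V : ℝ → ℝ) (z : ℂ) : ℂ := ∑' j : ℕ, Fc V ((j : ℤ) + 1) * z ^ (j + 1)

/-- `Ω(θ) = 2 Im N(e^{iθ})`. -/
def Omg (V : ℝ → ℝ) (θ : ℝ) : ℝ := 2 * (Nout V (Complex.exp (Complex.I * θ))).im

/-- The mean value `V₀ = (1/(2π)) ∫_{-π}^{π} V(θ) dθ`. -/
def Vmean (V : ℝ → ℝ) : ℝ := (1 / (2 * π)) * ∫ θ in (-π)..π, V θ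

/-- The extension operator `E_m f(r,θ) = Σ_{p=0}^{m-1} (f^{(p)}(θ)/p!) (-i log r)^p`. -/
def ExtOp (m : ℕ) (f : ℝ → ℝ) (r θ : ℝ) : ℂ :=
  ∑ p ∈ Finset.range m,
    ((iteratedDeriv p f θ : ℝ) : ℂ) / (Nat.factorial p : ℂ) * (-Complex.I * (Real.log r : ℂ)) ^ p

end
noncomputable section

/-- The norm `‖f‖_w = ⟨f,f⟩_w^{1/2}` induced by the inner product `ip w`. -/
def nrm (w : ℝ → ℝ) (f : ℝ → ℂ) : ℝ := Real.sqrt (ip w f f).re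

/-- A smooth "bump" function: `B : ℝ → [0,1]`, infinitely differentiable, `B ≡ 1` for
`|l| ≤ log 2 / 2` and `B ≡ 0` for `|l| ≥ log 2`. -/
def IsBump (B : ℝ → ℝ) : Prop :=
  ContDiff ℝ (⊤ : ℕ∞) B ∧ (∀ l, B l ∈ Set.Icc (0 : ℝ) 1) ∧
    (∀ l, |l| ≤ Real.log 2 / 2 → B l = 1) ∧ (∀ l, Real.log 2 ≤ |l| → B l = 0)

/-- The rational function
`f_n(z) = (i^{k+1}/(2π)) Σ_j Δ_j e^{iΩ(θ_j)} e^{i(n+1)θ_j} / (e^{iθ_j} - z)`. -/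
def fnfun (k ℓ : ℕ) (θj Δ : Fin ℓ → ℝ) (W : ℝ → ℝ) (n : ℕ) (z : ℂ) : ℂ :=
  Complex.I ^ (k + 1) / (2 * (π : ℂ)) *
    ∑ j : Fin ℓ, ((Δ j : ℝ) : ℂ) * Complex.exp (Complex.I * ((W (θj j) : ℝ) : ℂ)) *
      Complex.exp (Complex.I * ((n : ℂ) + 1) * ((θj j : ℝ) : ℂ)) /
        (Complex.exp (Complex.I * ((θj j : ℝ) : ℂ)) - z)

/-- `V^{(k)}` is piecewise continuous, with `ℓ` jump discontinuities at the points
`-π ≤ θ_1 < ⋯ < θ_ℓ < π` of magnitudes `Δ_j = V^{(k)}(θ_j+) - V^{(k)}(θ_j-)`, and has one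
Lipschitz continuous derivative between consecutive jump discontinuities.  Here `W` plays the
role of `V^{(k)}`, i.e. the derivative of `V^{(k-1)}` away from the (2π-translates of the)
jump points. -/
def JumpData (k : ℕ) (V : ℝ → ℝ) (ℓ : ℕ) (θj Δ : Fin ℓ → ℝ) : Prop :=
  StrictMono θj ∧ (∀ j, θj j ∈ Set.Ico (-π) π) ∧
    ∃ W : ℝ → ℝ, Function.Periodic W (2 * π) ∧
      (∀ x : ℝ, (∀ j : Fin ℓ, ∀ m : ℤ, x ≠ θj j + 2 * π * m) →
        HasDerivAt (iteratedDeriv (k - 1) V) (W x) x) ∧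
      (∀ j : Fin ℓ, ∃ wp wm : ℝ,
        Filter.Tendsto W (nhdsWithin (θj j) (Set.Ioi (θj j))) (nhds wp) ∧
        Filter.Tendsto W (nhdsWithin (θj j) (Set.Iio (θj j))) (nhds wm) ∧
        Δ j = wp - wm) ∧
      (∀ a b : ℝ, (∀ x ∈ Set.Ioo a b, ∀ j : Fin ℓ, ∀ m : ℤ, x ≠ θj j + 2 * π * m) →
        (∃ W' : ℝ → ℝ, (∀ x ∈ Set.Ioo a b, HasDerivAt W (W' x) x) ∧
          ∃ L : NNReal, LipschitzOnWith L W' (Set.Ioo a b)))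

end
noncomputable section

open Polynomial in
/-- The restriction of a polynomial to the unit circle, as a function of the angle. -/
def ev (f : ℂ[X]) (θ : ℝ) : ℂ := f.eval (Complex.exp (Complex.I * θ))

open Polynomial in
/-- The weighted `L²` norm of a polynomial on the unit circle. -/
def N (w : ℝ → ℝ) (f : ℂ[X]) : ℝ := nrm w (ev f)

section OPUC
open Polynomial

@[fun_prop]
lemma ev_continuous (f : ℂ[X]) : Continuous (ev f) := by
  unfold ev
  exact f.continuous.comp (by fun_prop)

lemma ev_X_pow (j : ℕ) : ev (X ^ j) = fun θ : ℝ => Complex.exp (Complex.I * (j : ℂ) * θ) := by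
  funext θ
  simp only [ev, eval_pow, eval_X, ← Complex.exp_nat_mul]
  congr 1; ring

/-- `ip w` as a sesquilinear form on polynomials, linear in the first argument. -/
def B (w : ℝ → ℝ) (hw : Continuous w) :
    ℂ[X] →ₗ[ℂ] ℂ[X] →ₛₗ[starRingEnd ℂ] ℂ :=
  LinearMap.mk₂'ₛₗ (RingHom.id ℂ) (starRingEnd ℂ) (fun f g => ip w (ev f) (ev g))
    (by
      intro f f' g
      simp only [ip]
      rw [← mul_add, ← intervalIntegral.integral_add]
      · congr 2; funext θ; simp only [ev, eval_add]; ring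
      · exact Continuous.intervalIntegrable (by fun_prop) _ _
      · exact Continuous.intervalIntegrable (by fun_prop) _ _)
    (by
      intro c f g
      simp only [ip, RingHom.id_apply, smul_eq_mul]
      rw [mul_left_comm, ← intervalIntegral.integral_const_mul c]
      congr 2; funext θ; simp only [ev, eval_smul, smul_eq_mul]; ring)
    (by
      intro f g g'
      simp only [ip]
      rw [← mul_add, ← intervalIntegral.integral_add]
      · congr 2; funext θ; simp only [ev, eval_add, map_add]; ring
      · exact Continuous.intervalIntegrable (by fun_prop) _ _
      · exact Continuous.intervalIntegrable (by fun_prop) _ _)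
    (by
      intro c f g
      simp only [ip, smul_eq_mul]
      rw [mul_left_comm, ← intervalIntegral.integral_const_mul ((starRingEnd ℂ) c)]
      congr 2; funext θ; simp only [ev, eval_smul, smul_eq_mul, map_mul]; ring)

lemma B_apply (w : ℝ → ℝ) (hw : Continuous w) (f g : ℂ[X]) :
    B w hw f g = ip w (ev f) (ev g) := rfl

lemma ip_conj (w f g) : (starRingEnd ℂ) (ip w f g) = ip w g f := by
  simp only [ip, map_mul, intervalIntegral.integral_of_le (show -π ≤ π by linarith [Real.pi_pos]),
    ← integral_conj]
  congr 1
  · simp [Complex.conj_ofNat]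
  · congr 1; funext θ
    simp only [Complex.conj_conj, Complex.conj_ofReal]; ring

lemma ip_self (w : ℝ → ℝ) (f : ℝ → ℂ) :
    ip w f f = ((1 / (2 * π) * ∫ θ in (-π)..π, ‖f θ‖ ^ 2 * w θ : ℝ) : ℂ) := by
  simp only [ip]
  push_cast
  rw [← intervalIntegral.integral_ofReal]
  congr 2; funext θ
  rw [Complex.mul_conj, Complex.normSq_eq_norm_sq]; push_cast; ring

variable {w : ℝ → ℝ}

lemma ip_self_re_nonneg (h0 : ∀ θ, 0 ≤ w θ) (f : ℝ → ℂ) : 0 ≤ (ip w f f).re := by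
  rw [ip_self, Complex.ofReal_re]
  refine mul_nonneg (by positivity) ?_
  refine intervalIntegral.integral_nonneg (by linarith [Real.pi_pos]) fun θ _ => ?_
  exact mul_nonneg (by positivity) (h0 θ)

lemma N_sq_re (h0 : ∀ θ, 0 ≤ w θ) (f : ℂ[X]) : N w f ^ 2 = (ip w (ev f) (ev f)).re :=
  Real.sq_sqrt (ip_self_re_nonneg h0 _)

lemma N_sq (h0 : ∀ θ, 0 ≤ w θ) (f : ℂ[X]) :
    N w f ^ 2 = 1 / (2 * π) * ∫ θ in (-π)..π, ‖ev f θ‖ ^ 2 * w θ := by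
  rw [N_sq_re h0, ip_self, Complex.ofReal_re]

lemma N_nonneg (f : ℂ[X]) : 0 ≤ N w f := Real.sqrt_nonneg _

/-- Minkowski's inequality, through Mathlib's seminorm attached to a semi-inner product. -/
lemma N_add_le (hw : Continuous w) (h0 : ∀ θ, 0 ≤ w θ) (f g : ℂ[X]) :
    N w (f + g) ≤ N w f + N w g := by
  let c : PreInnerProductSpace.Core ℂ ℂ[X] :=
    { inner := fun x y => B w hw y x
      conj_inner_symm := fun x y => by simp only [B_apply]; exact ip_conj _ _ _
      re_inner_nonneg := fun x => ip_self_re_nonneg h0 _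
      add_left := fun x y z => by simp
      smul_left := fun x y r => by simp }
  let _ : SeminormedAddCommGroup ℂ[X] := InnerProductSpace.Core.toSeminormedAddCommGroup (c := c)
  exact norm_add_le f g

lemma N_smul (h0 : ∀ θ, 0 ≤ w θ) (c : ℂ) (f : ℂ[X]) : N w (c • f) = ‖c‖ * N w f := by
  rw [← sq_eq_sq₀ (N_nonneg _) (mul_nonneg (norm_nonneg _) (N_nonneg _)), mul_pow, N_sq h0,
    N_sq h0, mul_left_comm, ← intervalIntegral.integral_const_mul (‖c‖ ^ 2)]
  congr 2; funext θ
  simp only [ev, eval_smul, smul_eq_mul, norm_mul]; ring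

lemma N_X_pow_mul (m : ℕ) (f : ℂ[X]) : N w (X ^ m * f) = N w f := by
  simp only [N, nrm, ip_self]
  congr 5; funext θ
  simp only [ev, eval_mul, eval_pow, eval_X, norm_mul, norm_pow]
  rw [mul_comm Complex.I, Complex.norm_exp_ofReal_mul_I]; simp

/-! ### Parseval and the Bernstein inequality -/

lemma ip_one_X_pow (i j : ℕ) :
    ip (fun _ => 1) (ev (X ^ i)) (ev (X ^ j)) = if i = j then 1 else 0 := by
  have hpi : (π : ℂ) ≠ 0 := by exact_mod_cast Real.pi_ne_zero
  have h : ∀ θ : ℝ, ev (X ^ i) θ * (starRingEnd ℂ) (ev (X ^ j) θ) * ((1 : ℝ) : ℂ)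
      = Complex.exp ((Complex.I * ((i : ℂ) - j)) * θ) := by
    intro θ
    rw [ev_X_pow, ev_X_pow]
    simp only [← Complex.exp_conj, map_mul, Complex.conj_I, Complex.conj_ofReal, map_natCast,
      Complex.ofReal_one, mul_one, ← Complex.exp_add]
    congr 1; ring
  simp only [ip, h]
  split_ifs with hij
  · subst hij
    simp only [sub_self, mul_zero, zero_mul, Complex.exp_zero, intervalIntegral.integral_const,
      Complex.real_smul]
    push_cast
    field_simp
    ring
  · have hne : Complex.I * ((i : ℂ) - j) ≠ 0 :=
      mul_ne_zero Complex.I_ne_zero (sub_ne_zero.2 (by exact_mod_cast hij))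
    rw [integral_exp_mul_complex hne]
    have : Complex.exp (Complex.I * ((i : ℂ) - j) * (π : ℝ))
        = Complex.exp (Complex.I * ((i : ℂ) - j) * ((-π : ℝ) : ℂ)) := by
      rw [Complex.exp_eq_exp_iff_exists_int]
      exact ⟨(i : ℤ) - j, by push_cast; ring⟩
    rw [this]; simp

/-- Parseval's identity for the constant weight. -/
lemma N_one_sq {n : ℕ} {f : ℂ[X]} (hf : f.natDegree ≤ n) :
    N (fun _ => 1) f ^ 2 = ∑ k ∈ Finset.range (n + 1), ‖f.coeff k‖ ^ 2 := by
  have hc : Continuous (fun _ : ℝ => (1 : ℝ)) := continuous_const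
  have hfs : f = ∑ k ∈ Finset.range (n + 1), f.coeff k • (X ^ k : ℂ[X]) := by
    conv_lhs => rw [f.as_sum_range' (n + 1) (by omega)]
    simp [smul_X_eq_monomial]
  have : ip (fun _ => 1) (ev f) (ev f)
      = ((∑ k ∈ Finset.range (n + 1), ‖f.coeff k‖ ^ 2 : ℝ) : ℂ) := by
    rw [← B_apply _ hc]
    have h2 : B _ hc f f = B _ hc (∑ k ∈ Finset.range (n + 1), f.coeff k • (X ^ k : ℂ[X]))
        (∑ k ∈ Finset.range (n + 1), f.coeff k • (X ^ k : ℂ[X])) := by rw [← hfs]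
    rw [h2]
    simp only [map_sum, LinearMap.sum_apply, map_smul, LinearMap.smul_apply,
      LinearMap.map_smulₛₗ, B_apply, ip_one_X_pow, smul_eq_mul]
    push_cast
    refine Finset.sum_congr rfl fun k hk => ?_
    simp only [mul_ite, mul_one, mul_zero, Finset.sum_ite_eq', hk, if_true]
    rw [mul_comm, Complex.mul_conj, Complex.normSq_eq_norm_sq]
    push_cast; rfl
  rw [N_sq_re (fun _ => zero_le_one), this, Complex.ofReal_re]

lemma N_one_derivative {n : ℕ} {f : ℂ[X]} (hf : f.natDegree ≤ n) :
    N (fun _ => 1) (derivative f) ≤ n * N (fun _ => 1) f := by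
  rw [← sq_le_sq₀ (N_nonneg _) (mul_nonneg (Nat.cast_nonneg _) (N_nonneg _)), mul_pow,
    N_one_sq hf, N_one_sq (n := n) ((natDegree_derivative_le f).trans (by omega)),
    Finset.sum_range_succ, Finset.sum_range_succ' (fun k => ‖f.coeff k‖ ^ 2), mul_add,
    Finset.mul_sum]
  have hlast : (derivative f).coeff n = 0 := by
    rw [coeff_derivative, coeff_eq_zero_of_natDegree_lt (by omega), zero_mul]
  rw [hlast]
  refine add_le_add (Finset.sum_le_sum fun k hk => ?_) (by simp; positivity)
  have hk' : k + 1 ≤ n := Finset.mem_range.1 hk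
  have hk'' : ((k : ℝ) + 1) ≤ n := by exact_mod_cast hk'
  have hnorm : ‖((k : ℂ) + 1)‖ = (k : ℝ) + 1 := by
    have := Complex.norm_natCast (k + 1)
    push_cast at this
    exact this
  rw [coeff_derivative, norm_mul, mul_pow, hnorm, mul_comm]
  gcongr

lemma N_one_iterate_derivative (p : ℕ) {n : ℕ} {f : ℂ[X]} (hf : f.natDegree ≤ n) :
    N (fun _ => 1) (derivative^[p] f) ≤ (n : ℝ) ^ p * N (fun _ => 1) f := by
  induction p with
  | zero => simp
  | succ p ih =>
    rw [Function.iterate_succ_apply']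
    have hd : (derivative^[p] f).natDegree ≤ n :=
      (natDegree_iterate_derivative f p).trans (by omega)
    calc _ ≤ n * N (fun _ => 1) (derivative^[p] f) := N_one_derivative hd
      _ ≤ n * ((n : ℝ) ^ p * N (fun _ => 1) f) := by gcongr
      _ = _ := by ring

lemma N_mono {v : ℝ → ℝ} (hv : Continuous v) (hw : Continuous w) (h0 : ∀ θ, 0 ≤ v θ)
    (h : ∀ θ ∈ Icc (-π) π, v θ ≤ w θ) (h1 : ∀ θ, 0 ≤ w θ) (f : ℂ[X]) : N v f ≤ N w f := by
  rw [← sq_le_sq₀ (N_nonneg _) (N_nonneg _), N_sq h0, N_sq h1]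
  refine mul_le_mul_of_nonneg_left ?_ (by positivity)
  refine intervalIntegral.integral_mono_on (by linarith [Real.pi_pos])
    (Continuous.intervalIntegrable (by fun_prop) _ _)
    (Continuous.intervalIntegrable (by fun_prop) _ _) fun θ hθ => ?_
  exact mul_le_mul_of_nonneg_left (h θ hθ) (by positivity)

lemma N_const {a : ℝ} (ha : 0 ≤ a) (f : ℂ[X]) :
    N (fun _ => a) f = √a * N (fun _ => 1) f := by
  rw [← sq_eq_sq₀ (N_nonneg _) (mul_nonneg (Real.sqrt_nonneg _) (N_nonneg _)), mul_pow,
    Real.sq_sqrt ha, N_sq (fun _ => ha), N_sq (fun _ => zero_le_one), mul_left_comm,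
    ← intervalIntegral.integral_const_mul a]
  congr 2; funext θ; ring

/-- A positive continuous weight gives a norm equivalent to the unweighted one. -/
lemma N_equiv (hw : Continuous w) (h0 : ∀ θ, 0 < w θ) :
    ∃ a b : ℝ, 0 < a ∧ 0 < b ∧
      ∀ f : ℂ[X], a * N (fun _ => 1) f ≤ N w f ∧ N w f ≤ b * N (fun _ => 1) f := by
  have hne : (Icc (-π) π).Nonempty := ⟨0, by constructor <;> linarith [Real.pi_pos]⟩
  obtain ⟨x, -, hx⟩ := isCompact_Icc.exists_isMinOn hne hw.continuousOn
  obtain ⟨y, -, hy⟩ := isCompact_Icc.exists_isMaxOn hne hw.continuousOn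
  refine ⟨√(w x), √(w y), Real.sqrt_pos.2 (h0 x), Real.sqrt_pos.2 (h0 y), fun f => ⟨?_, ?_⟩⟩
  · rw [← N_const (h0 x).le]
    exact N_mono continuous_const hw (fun _ => (h0 x).le) (fun θ hθ => hx hθ)
      (fun θ => (h0 θ).le) f
  · rw [← N_const (h0 y).le]
    exact N_mono hw continuous_const (fun θ => (h0 θ).le) (fun θ hθ => hy hθ)
      (fun _ => (h0 y).le) f

/-- Bernstein's inequality in the weighted norm, with a constant depending only on the weight. -/
lemma N_bernstein (hw : Continuous w) (h0 : ∀ θ, 0 < w θ) :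
    ∃ C : ℝ, 0 < C ∧ ∀ (p n : ℕ) (f : ℂ[X]), f.natDegree ≤ n →
      N w (derivative^[p] f) ≤ C * (n : ℝ) ^ p * N w f := by
  obtain ⟨a, b, ha, hb, hab⟩ := N_equiv hw h0
  refine ⟨b / a, by positivity, fun p n f hf => ?_⟩
  calc _ ≤ b * N (fun _ => 1) (derivative^[p] f) := (hab _).2
    _ ≤ b * ((n : ℝ) ^ p * N (fun _ => 1) f) := by
      gcongr; exact N_one_iterate_derivative p hf
    _ = b / a * (n : ℝ) ^ p * (a * N (fun _ => 1) f) := by field_simp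
    _ ≤ _ := by gcongr; exact (hab f).1

/-- To leading order in `n`, differentiating `z^m Q` with `Q` fixed and `m ≤ n` multiplies the norm
by at most `n` each time. -/
lemma N_shift_deriv (hw : Continuous w) (h0 : ∀ θ, 0 ≤ w θ) (p : ℕ) (Q : ℂ[X]) :
    ∃ K : ℝ, 0 ≤ K ∧ ∀ m n : ℕ, m ≤ n → 1 ≤ n →
      N w (derivative^[p] (X ^ m * Q)) ≤ (n : ℝ) ^ p * (N w Q + K / n) := by
  induction p generalizing Q with
  | zero => exact ⟨0, le_rfl, fun m n _ _ => by simp [N_X_pow_mul]⟩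
  | succ p ih =>
    obtain ⟨K, hK, h⟩ := ih Q
    obtain ⟨K', hK', h'⟩ := ih (derivative Q)
    refine ⟨K + (N w (derivative Q) + K'), by have := N_nonneg (w := w) (derivative Q); positivity,
      fun m n hmn hn => ?_⟩
    have hn1 : (1 : ℝ) ≤ n := by exact_mod_cast hn
    have hn0 : (0 : ℝ) < n := by linarith
    have e : derivative^[p + 1] (X ^ m * Q)
        = (m : ℂ) • derivative^[p] (X ^ (m - 1) * Q)
          + derivative^[p] (X ^ m * derivative Q) := by
      rw [Function.iterate_succ_apply, derivative_mul, derivative_X_pow,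
        iterate_map_add, mul_assoc, ← smul_eq_C_mul, iterate_derivative_smul]
    rw [e]
    refine (N_add_le hw h0 _ _).trans ?_
    rw [N_smul h0, Complex.norm_natCast]
    have h1 := h (m - 1) n (by omega) hn
    have h2 := h' m n hmn hn
    have hmn' : (m : ℝ) ≤ n := by exact_mod_cast hmn
    have h3 : K' / n ≤ K' := div_le_self hK' hn1
    calc _ ≤ (n : ℝ) * ((n : ℝ) ^ p * (N w Q + K / n))
          + (n : ℝ) ^ p * (N w (derivative Q) + K') := by
          refine add_le_add (mul_le_mul hmn' h1 (N_nonneg _) hn0.le) (h2.trans ?_)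
          gcongr
      _ = _ := by field_simp; ring

/-! ### Extremality of the orthogonal polynomials -/

/-- Pythagoras: `P` is the orthogonal projection of `0` onto the affine space of polynomials of
degree `≤ n` with `n`-th coefficient `1`. -/
lemma N_sq_eq_add (hw : Continuous w) (h0 : ∀ θ, 0 ≤ w θ) {n : ℕ} {P Q : ℂ[X]}
    (hP : IsMonicOPUC w n P) (hQ : Q.natDegree ≤ n) (hQ1 : Q.coeff n = 1) :
    N w Q ^ 2 = N w P ^ 2 + N w (Q - P) ^ 2 := by
  obtain ⟨hm, hd, ho⟩ := hP
  have hP1 : P.coeff n = 1 := by rw [← hd]; exact hm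
  obtain ⟨r, hr⟩ : ∃ r, r = Q - P := ⟨_, rfl⟩
  have hrs : r = ∑ k ∈ Finset.range n, r.coeff k • (X ^ k : ℂ[X]) := by
    have h1 : r.natDegree < n + 1 := by
      rw [hr]; have := natDegree_sub_le Q P; have := max_le hQ hd.le; omega
    conv_lhs => rw [r.as_sum_range' (n + 1) h1, Finset.sum_range_succ]
    have : r.coeff n = 0 := by rw [hr, coeff_sub, hQ1, hP1, sub_self]
    simp [smul_X_eq_monomial, this]
  have horth : B w hw P r = 0 := by
    rw [hrs, map_sum]
    refine Finset.sum_eq_zero fun k hk => ?_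
    rw [LinearMap.map_smulₛₗ, B_apply, ev_X_pow]
    have := ho k (Finset.mem_range.1 hk)
    simp only [smul_eq_mul]
    exact mul_eq_zero_of_right _ this
  have horth' : B w hw r P = 0 := by
    rw [B_apply, ← ip_conj, ← B_apply _ hw, horth, map_zero]
  have hQr : Q = P + r := by rw [hr]; ring
  rw [← hr, N_sq_re h0, N_sq_re h0, N_sq_re h0, ← B_apply _ hw, ← B_apply _ hw, ← B_apply _ hw,
    hQr]
  simp only [map_add, LinearMap.add_apply, horth, horth']
  simp

variable {P : ℕ → ℂ[X]}

lemma N_OPUC_le (hw : Continuous w) (h0 : ∀ θ, 0 ≤ w θ) {n : ℕ} {P Q : ℂ[X]}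
    (hP : IsMonicOPUC w n P) (hQ : Q.natDegree ≤ n) (hQ1 : Q.coeff n = 1) : N w P ≤ N w Q := by
  rw [← sq_le_sq₀ (N_nonneg _) (N_nonneg _), N_sq_eq_add hw h0 hP hQ hQ1]
  linarith [sq_nonneg (N w (Q - P))]

lemma shift_OPUC (hP : ∀ n, IsMonicOPUC w n (P n)) {M n : ℕ} (h : M ≤ n) :
    (X ^ (n - M) * P M).natDegree ≤ n ∧ (X ^ (n - M) * P M).coeff n = 1 := by
  obtain ⟨hm, hd, -⟩ := hP M
  have hm' : (X ^ (n - M) * P M).Monic := (monic_X_pow _).mul hm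
  have hd' : (X ^ (n - M) * P M).natDegree = n := by
    rw [(monic_X_pow _).natDegree_mul hm, natDegree_X_pow, hd]; omega
  exact ⟨hd'.le, by simpa [Monic, leadingCoeff, hd'] using hm'⟩

lemma N_OPUC_antitone (hw : Continuous w) (h0 : ∀ θ, 0 ≤ w θ)
    (hP : ∀ n, IsMonicOPUC w n (P n)) : Antitone fun n => N w (P n) := by
  intro M n h
  have := N_OPUC_le hw h0 (hP n) (shift_OPUC hP h).1 (shift_OPUC hP h).2
  rwa [N_X_pow_mul] at this

lemma N_OPUC_lower (hw : Continuous w) (h0 : ∀ θ, 0 < w θ)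
    (hP : ∀ n, IsMonicOPUC w n (P n)) : ∃ a : ℝ, 0 < a ∧ ∀ n, a ≤ N w (P n) := by
  obtain ⟨a, b, ha, hb, hab⟩ := N_equiv hw h0
  refine ⟨a, ha, fun n => le_trans ?_ (hab _).1⟩
  obtain ⟨hm, hd, -⟩ := hP n
  have hP1 : (P n).coeff n = 1 := by
    have : (P n).coeff (P n).natDegree = 1 := hm
    rwa [hd] at this
  refine le_mul_of_one_le_right ha.le ?_
  rw [← sq_le_sq₀ zero_le_one (N_nonneg _), N_one_sq hd.le]
  refine le_trans ?_ (Finset.single_le_sum (f := fun k => ‖(P n).coeff k‖ ^ 2)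
    (fun k _ => by positivity) (Finset.self_mem_range_succ n))
  simp [hP1]

lemma N_deriv_lower (hw : Continuous w) (h0 : ∀ θ, 0 ≤ w θ)
    (hP : ∀ n, IsMonicOPUC w n (P n)) {p n : ℕ} (hpn : p ≤ n) :
    (n.descFactorial p : ℝ) * N w (P n) ≤ N w (derivative^[p] (P n)) := by
  obtain ⟨hm, hd, -⟩ := hP n
  have hP1 : (P n).coeff n = 1 := by
    have : (P n).coeff (P n).natDegree = 1 := hm
    rwa [hd] at this
  have hpos : 0 < n.descFactorial p := Nat.descFactorial_pos.2 hpn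
  have hne : (n.descFactorial p : ℂ) ≠ 0 := by exact_mod_cast hpos.ne'
  have hpos' : (0 : ℝ) < n.descFactorial p := by exact_mod_cast hpos
  have hQ := N_OPUC_le (Q := (n.descFactorial p : ℂ)⁻¹ • derivative^[p] (P n)) hw h0 (hP (n - p))
    ((natDegree_smul_le _ _).trans ((natDegree_iterate_derivative _ _).trans (by rw [hd])))
    (by
      rw [coeff_smul, coeff_iterate_derivative, Nat.sub_add_cancel hpn, hP1]
      simp [hne])
  rw [N_smul h0, norm_inv, Complex.norm_natCast, le_inv_mul_iff₀ hpos'] at hQ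
  refine le_trans ?_ hQ
  gcongr
  exact N_OPUC_antitone hw h0 hP (Nat.sub_le n p)

lemma N_deriv_upper (hw : Continuous w) (h0 : ∀ θ, 0 < w θ)
    (hP : ∀ n, IsMonicOPUC w n (P n)) (p : ℕ) :
    ∃ C : ℝ, ∀ M : ℕ, ∃ K : ℝ, ∀ n, M ≤ n → 1 ≤ n →
      N w (derivative^[p] (P n)) ≤ (n : ℝ) ^ p *
        (N w (P M) + K / n + C * √(N w (P M) ^ 2 - N w (P n) ^ 2)) := by
  have h0' := fun θ => (h0 θ).le
  obtain ⟨C, hC, hB⟩ := N_bernstein hw h0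
  refine ⟨C, fun M => ?_⟩
  obtain ⟨K, -, hK⟩ := N_shift_deriv hw h0' p (P M)
  refine ⟨K, fun n hMn hn => ?_⟩
  set S := X ^ (n - M) * P M with hS
  obtain ⟨hS1, hS2⟩ := shift_OPUC hP hMn
  have hpy := N_sq_eq_add hw h0' (hP n) hS1 hS2
  rw [N_X_pow_mul, ← hS] at hpy
  have hr : √(N w (P M) ^ 2 - N w (P n) ^ 2) = N w (S - P n) := by
    rw [hpy, add_sub_cancel_left, Real.sqrt_sq (N_nonneg _)]
  have hrd : (S - P n).natDegree ≤ n :=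
    (natDegree_sub_le _ _).trans (max_le hS1 (hP n).2.1.le)
  have e : derivative^[p] (P n) = derivative^[p] S + (-1 : ℂ) • derivative^[p] (S - P n) := by
    rw [iterate_derivative_sub, neg_one_smul]; ring
  rw [e, hr]
  refine (N_add_le hw h0' _ _).trans ?_
  rw [N_smul h0', norm_neg, norm_one, one_mul]
  have h1 := hK (n - M) n (Nat.sub_le _ _) hn
  have h2 := hB p n _ hrd
  linarith

/-! ### The limit -/

lemma tendsto_descFactorial_div_pow (p : ℕ) :
    Tendsto (fun n : ℕ => (n.descFactorial p : ℝ) / (n : ℝ) ^ p) atTop (nhds 1) := by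
  induction p with
  | zero => simp
  | succ p ih =>
    have h1 : Tendsto (fun n : ℕ => 1 - (p : ℝ) / n) atTop (nhds (1 - 0)) :=
      tendsto_const_nhds.sub (tendsto_const_div_atTop_nhds_zero_nat _)
    have h2 := h1.mul ih
    rw [sub_zero, one_mul] at h2
    refine h2.congr' ?_
    filter_upwards [eventually_ge_atTop (p + 1)] with n hn
    have hn0 : (n : ℝ) ≠ 0 := by
      have : n ≠ 0 := by omega
      exact_mod_cast this
    rw [Nat.descFactorial_succ, Nat.cast_mul, Nat.cast_sub (by omega)]
    field_simp
    ring

/-- The analytic core: the two-sided bounds on the derivatives force the limit. -/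
lemma tendsto_ratio (hw : Continuous w) (h0 : ∀ θ, 0 < w θ)
    (hP : ∀ n, IsMonicOPUC w n (P n)) (p : ℕ) :
    Tendsto (fun n : ℕ => 1 / (n : ℝ) ^ p * N w (derivative^[p] (P n)) / N w (P n))
      atTop (nhds 1) := by
  have h0' := fun θ => (h0 θ).le
  obtain ⟨a, ha, hlow⟩ := N_OPUC_lower hw h0 hP
  obtain ⟨C, hC⟩ := N_deriv_upper hw h0 hP p
  have hpos : ∀ n, 0 < N w (P n) := fun n => ha.trans_le (hlow n)
  obtain ⟨h, hh⟩ : ∃ h, Tendsto (fun n => N w (P n)) atTop (nhds h) :=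
    ⟨_, tendsto_atTop_ciInf (N_OPUC_antitone hw h0' hP) ⟨a, by rintro _ ⟨n, rfl⟩; exact hlow n⟩⟩
  have hh0 : 0 < h := ha.trans_le (ge_of_tendsto' hh hlow)
  rw [tendsto_order]
  constructor
  · intro c hc
    filter_upwards [(tendsto_order.1 (tendsto_descFactorial_div_pow p)).1 c hc,
      eventually_ge_atTop (p + 1)] with n hn hpn
    have hn0 : (0 : ℝ) < n := by
      have : 0 < n := by omega
      exact_mod_cast this
    refine hn.trans_le ?_
    rw [le_div_iff₀ (hpos n), one_div_mul_eq_div, div_mul_eq_mul_div]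
    gcongr
    exact N_deriv_lower hw h0' hP (by omega)
  · intro c hc
    -- the upper bound for the quotient, after letting `n → ∞`, as a function of `M`
    have hM : Tendsto (fun M => (N w (P M) + C * √(N w (P M) ^ 2 - h ^ 2)) / h) atTop
        (nhds 1) := by
      have := (hh.add ((((hh.pow 2).sub_const (h ^ 2)).sqrt).const_mul C)).div_const h
      simpa [hh0.ne'] using this
    obtain ⟨M, hMc⟩ := ((tendsto_order.1 hM).2 c hc).exists
    obtain ⟨K, hK⟩ := hC M
    have hn : Tendsto (fun n : ℕ =>
        (N w (P M) + K / n + C * √(N w (P M) ^ 2 - N w (P n) ^ 2)) / N w (P n)) atTop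
        (nhds ((N w (P M) + 0 + C * √(N w (P M) ^ 2 - h ^ 2)) / h)) :=
      ((tendsto_const_nhds.add (tendsto_const_div_atTop_nhds_zero_nat K)).add
        (((tendsto_const_nhds.sub (hh.pow 2)).sqrt).const_mul C)).div hh hh0.ne'
    rw [add_zero] at hn
    filter_upwards [(tendsto_order.1 hn).2 c hMc, eventually_ge_atTop M,
      eventually_ge_atTop 1] with n hnc hMn hn1
    have hn0 : (0 : ℝ) < n := by exact_mod_cast hn1
    refine lt_of_le_of_lt ?_ hnc
    have := hpos n
    gcongr
    rw [one_div_mul_eq_div, div_le_iff₀ (by positivity), mul_comm]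
    exact hK n hMn hn1

end OPUC

end

/-- Fixed weight `φ = e^{-V}` with `V ∈ C^{k-1,1}(S¹)`, `k ≥ 2p+1`.  Then
`lim_{n→∞} (1/n^p) ‖π_n^{(p)}‖_φ / ‖π_n‖_φ = 1`. -/
theorem stmt3 (V : ℝ → ℝ) (p k : ℕ) (hk : 2 * p + 1 ≤ k) (hV : ClassC k V)
    (P : ℕ → Polynomial ℂ)
    (hP : ∀ n, IsMonicOPUC (fun θ => Real.exp (-V θ)) n (P n)) :
    Tendsto (fun n : ℕ =>
      (1 / (n : ℝ) ^ p) *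
        nrm (fun θ => Real.exp (-V θ))
          (fun θ => ((⇑Polynomial.derivative)^[p] (P n)).eval (Complex.exp (Complex.I * θ))) /
        nrm (fun θ => Real.exp (-V θ))
          (fun θ => (P n).eval (Complex.exp (Complex.I * θ))))
      atTop (nhds 1) := by
  exact tendsto_ratio (w := fun θ => Real.exp (-V θ))
    (Real.continuous_exp.comp hV.2.1.continuous.neg) (fun θ => Real.exp_pos _) hP p
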